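/- Let (X_1,…,X_r) have the GEV_r density f_r with parameters μ ∈ ℝ, σ > 0, ξ ≠ 0. Then for every j with 1 ≤ j ≤ r, E[(log(1+ξ Z_j))²] = ξ² Γ″(j)/Γ(j), where Γ″ denotes the second derivative of the Gamma function; in particular this expectation is finite. -/

import Mathlib

/-!
The map `x ↦ (1 + ξ (x - μ) / σ) ^ (-1 / ξ)`, applied to each coordinate, reverses the order, and
its Jacobian cancels the product factor of the GEV_r density. It therefore carries the GEV_r law to
the density `exp (-t_r)` on `0 < t_1 < ⋯ < t_r`, the law of the first `r` arrival times of a Poisson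
process of rate one. Integrating out the last arrival time leaves the same law with one arrival
less, so the `j`-th coordinate `T_j` is Gamma distributed with shape `j` and rate one. Since
`log (1 + ξ Z_j) = -ξ log T_j`, the moments sought are those of `log T_j`, which are the derivatives
at `0` of its moment generating function `s ↦ Γ(j + s) / Γ(j)`.
-/

open MeasureTheory ProbabilityTheory Real Filter Topology

/-- The joint density of the `r` largest order statistics limit (GEV_r) with
location `μ`, scale `σ`, and shape `ξ ≠ 0`.  The coordinates are in decreasing
order: `x 0` is `x_1` (the largest) and `x ⟨r-1,_⟩` is `x_r`. -/
noncomputable def gevrDensity (μ σ ξ : ℝ) (r : ℕ) (x : Fin r → ℝ) : ℝ :=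
  if h : 0 < r ∧ StrictAnti x ∧ (∀ j, 0 < 1 + ξ * ((x j - μ) / σ)) then
    (σ ^ r)⁻¹ * Real.exp
      (-(1 + ξ * ((x ⟨r - 1, Nat.sub_lt h.1 Nat.one_pos⟩ - μ) / σ)) ^ (-1 / ξ)
        - (1 / ξ + 1) * ∑ j, Real.log (1 + ξ * ((x j - μ) / σ)))
  else 0

/-- The GEV_r probability measure on `ℝ^r`, given by the density `gevrDensity`. -/
noncomputable def gevrMeasure (μ σ ξ : ℝ) (r : ℕ) : Measure (Fin r → ℝ) :=
  MeasureTheory.volume.withDensity fun x => ENNReal.ofReal (gevrDensity μ σ ξ r x)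

open Set
open scoped ENNReal

section ArrivalTimes

/-- The tuples `0 < t 0 < t 1 < ⋯ < t (n - 1)`: the possible values of the first `n` arrival times
of a point process on the positive half-line. -/
def arrivalTimes (n : ℕ) : Set (Fin n → ℝ) := {t | (∀ i, 0 < t i) ∧ StrictMono t}

/-- The law of the first `n + 1` arrival times of a Poisson process of rate one. -/
noncomputable def poissonArrivalMeasure (n : ℕ) : Measure (Fin (n + 1) → ℝ) :=
  (volume.restrict (arrivalTimes (n + 1))).withDensity
    fun t => ENNReal.ofReal (exp (-t (Fin.last n)))

lemma measurableSet_strictMono {ι α : Type*} [Countable ι] [Preorder ι] [LinearOrder α]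
    [TopologicalSpace α] [OrderClosedTopology α] [SecondCountableTopology α] [MeasurableSpace α]
    [OpensMeasurableSpace α] : MeasurableSet {x : ι → α | StrictMono x} := by
  simp only [StrictMono, ofPred_forall]
  exact .iInter fun i => .iInter fun j => .iInter fun _ =>
    measurableSet_lt (measurable_pi_apply i) (measurable_pi_apply j)

lemma measurableSet_arrivalTimes (n : ℕ) : MeasurableSet (arrivalTimes n) := by
  have hpos : MeasurableSet {t : Fin n → ℝ | ∀ i, 0 < t i} := by
    simp only [ofPred_forall]
    exact .iInter fun i => measurableSet_lt measurable_const (measurable_pi_apply i)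
  exact hpos.inter measurableSet_strictMono

lemma snoc_mem_arrivalTimes_iff {n : ℕ} {t : Fin (n + 1) → ℝ} {s : ℝ} :
    (Fin.snoc t s : Fin (n + 2) → ℝ) ∈ arrivalTimes (n + 2) ↔
      t ∈ arrivalTimes (n + 1) ∧ t (Fin.last n) < s := by
  simp only [arrivalTimes, mem_ofPred_eq, Fin.strictMono_iff_lt_succ, Fin.forall_fin_succ',
    Fin.snoc_castSucc, Fin.snoc_last, Fin.succ_castSucc, Fin.succ_last]
  constructor
  · rintro ⟨⟨hpos, -⟩, hmono, hlast⟩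
    exact ⟨⟨hpos, hmono⟩, hlast⟩
  · rintro ⟨⟨hpos, hmono⟩, hlast⟩
    exact ⟨⟨hpos, hpos.2.trans hlast⟩, hmono, hlast⟩

lemma lintegral_fin_snoc {α : Type*} [MeasureSpace α] [SigmaFinite (volume : Measure α)] (n : ℕ)
    {F : (Fin (n + 1) → α) → ℝ≥0∞} (hF : Measurable F) :
    ∫⁻ x, F x = ∫⁻ x : Fin n → α, ∫⁻ a, F (Fin.snoc x a) := by
  have hsplit := (volume_preserving_piFinSuccAbove (fun _ : Fin (n + 1) => α) (Fin.last n)).symm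
  have hsnoc (x : Fin n → α) (a : α) :
      (MeasurableEquiv.piFinSuccAbove (fun _ : Fin (n + 1) => α) (Fin.last n)).symm (a, x) =
        Fin.snoc x a :=
    Fin.insertNth_last' a x
  rw [← hsplit.lintegral_comp hF, Measure.volume_eq_prod, lintegral_prod_symm' _ (by fun_prop)]
  simp only [hsnoc]

lemma setLIntegral_arrivalTimes_succ (n : ℕ) {F : (Fin (n + 2) → ℝ) → ℝ≥0∞} (hF : Measurable F) :
    ∫⁻ t in arrivalTimes (n + 2), F t =
      ∫⁻ t in arrivalTimes (n + 1), ∫⁻ s in Ioi (t (Fin.last n)), F (Fin.snoc t s) := by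
  rw [← lintegral_indicator (measurableSet_arrivalTimes _),
    lintegral_fin_snoc _ (hF.indicator (measurableSet_arrivalTimes _)),
    ← lintegral_indicator (measurableSet_arrivalTimes _)]
  refine lintegral_congr fun t => ?_
  by_cases ht : t ∈ arrivalTimes (n + 1)
  · rw [indicator_of_mem ht, ← lintegral_indicator measurableSet_Ioi]
    simp only [indicator, snoc_mem_arrivalTimes_iff, ht, true_and, mem_Ioi]
  · simp [indicator, snoc_mem_arrivalTimes_iff, ht]

lemma setLIntegral_Ioi_setLIntegral_Ioi_swap {α : Type*} [LinearOrder α] [TopologicalSpace α]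
    [OrderClosedTopology α] [SecondCountableTopology α] [MeasurableSpace α]
    [OpensMeasurableSpace α] {μ ν : Measure α} [SFinite μ] [SFinite ν] {F : α → α → ℝ≥0∞}
    (hF : Measurable F.uncurry) (a : α) :
    ∫⁻ s in Ioi a, ∫⁻ t in Ioi s, F s t ∂ν ∂μ = ∫⁻ t in Ioi a, ∫⁻ s in Ioo a t, F s t ∂μ ∂ν := by
  have hG : Measurable ({p : α × α | a < p.1 ∧ p.1 < p.2}.indicator F.uncurry) :=
    hF.indicator ((measurableSet_lt measurable_const measurable_fst).inter
      (measurableSet_lt measurable_fst measurable_snd))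
  simp only [← lintegral_indicator measurableSet_Ioi, ← lintegral_indicator measurableSet_Ioo]
  calc
    _ = ∫⁻ s, ∫⁻ t, {p : α × α | a < p.1 ∧ p.1 < p.2}.indicator F.uncurry (s, t) ∂ν ∂μ := by
      refine lintegral_congr fun s => ?_
      by_cases hs : a < s <;> simp [indicator, hs]
    _ = ∫⁻ t, ∫⁻ s, {p : α × α | a < p.1 ∧ p.1 < p.2}.indicator F.uncurry (s, t) ∂μ ∂ν :=
      lintegral_lintegral_swap hG.aemeasurable
    _ = _ := by
      refine lintegral_congr fun t => ?_
      by_cases ht : a < t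
      · rw [indicator_of_mem (mem_Ioi.2 ht)]
        rfl
      · have hs (s : α) : ¬(a < s ∧ s < t) := fun h => ht (h.1.trans h.2)
        simp [indicator, ht, hs]

lemma setLIntegral_Ioo_pow_div_factorial (n : ℕ) {t : ℝ} (ht : 0 ≤ t) :
    ∫⁻ s in Ioo 0 t, ENNReal.ofReal (s ^ n / n.factorial) =
      ENNReal.ofReal (t ^ (n + 1) / (n + 1).factorial) := by
  have hint : IntegrableOn (fun s : ℝ => s ^ n / n.factorial) (Ioo 0 t) :=
    (Continuous.integrableOn_Icc (by fun_prop)).mono_set Ioo_subset_Icc_self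
  have hnonneg : 0 ≤ᵐ[volume.restrict (Ioo 0 t)] fun s : ℝ => s ^ n / n.factorial := by
    filter_upwards [ae_restrict_mem measurableSet_Ioo] with s hs
    exact div_nonneg (pow_nonneg hs.1.le n) (Nat.cast_nonneg _)
  rw [← ofReal_integral_eq_lintegral_ofReal hint hnonneg, ← integral_Ioc_eq_integral_Ioo,
    ← intervalIntegral.integral_of_le ht, intervalIntegral.integral_div, integral_pow,
    Nat.factorial_succ]
  push_cast
  congr 1
  field_simp
  simp

lemma setLIntegral_arrivalTimes_last (n : ℕ) {h : ℝ → ℝ≥0∞} (hh : Measurable h) :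
    ∫⁻ t in arrivalTimes (n + 1), h (t (Fin.last n)) =
      ∫⁻ t in Ioi 0, h t * ENNReal.ofReal (t ^ n / n.factorial) := by
  induction n generalizing h with
  | zero =>
    have hpre : arrivalTimes 1 = MeasurableEquiv.funUnique (Fin 1) ℝ ⁻¹' Ioi 0 := by
      ext t
      simp [arrivalTimes, Subsingleton.strictMono]
    rw [hpre]
    simpa using! (volume_preserving_funUnique (Fin 1) ℝ).setLIntegral_comp_preimage
      (measurableSet_Ioi (a := 0)) hh
  | succ n ih =>
    have htail : Measurable fun s => ∫⁻ t in Ioi s, h t :=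
      Antitone.measurable fun a b hab => lintegral_mono_set (Ioi_subset_Ioi hab)
    calc
      _ = ∫⁻ t in arrivalTimes (n + 1), ∫⁻ s in Ioi (t (Fin.last n)), h s := by
        simpa using setLIntegral_arrivalTimes_succ n (hh.comp (measurable_pi_apply (Fin.last _)))
      _ = ∫⁻ s in Ioi 0, ∫⁻ t in Ioi s, h t * ENNReal.ofReal (s ^ n / n.factorial) := by
        simp only [ih htail, lintegral_mul_const _ hh]
      _ = ∫⁻ t in Ioi 0, ∫⁻ s in Ioo 0 t, h t * ENNReal.ofReal (s ^ n / n.factorial) :=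
        setLIntegral_Ioi_setLIntegral_Ioi_swap (by fun_prop) 0
      _ = _ := by
        refine setLIntegral_congr_fun measurableSet_Ioi fun t ht => ?_
        rw [lintegral_const_mul _ (by fun_prop), setLIntegral_Ioo_pow_div_factorial n (le_of_lt ht)]

lemma lintegral_poissonArrivalMeasure (n : ℕ) {F : (Fin (n + 1) → ℝ) → ℝ≥0∞} (hF : Measurable F) :
    ∫⁻ t, F t ∂poissonArrivalMeasure n =
      ∫⁻ t in arrivalTimes (n + 1), ENNReal.ofReal (exp (-t (Fin.last n))) * F t :=
  lintegral_withDensity_eq_lintegral_mul _ (by fun_prop) hF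

lemma setLIntegral_exp_neg_Ioi (c : ℝ) :
    ∫⁻ t in Ioi c, ENNReal.ofReal (exp (-t)) = ENNReal.ofReal (exp (-c)) := by
  rw [← ofReal_integral_eq_lintegral_ofReal (integrableOn_exp_neg_Ioi c)
    (ae_of_all _ fun t => (exp_pos _).le), integral_exp_neg_Ioi]

lemma measurable_fin_init {n : ℕ} {α : Type*} [MeasurableSpace α] :
    Measurable (Fin.init : (Fin (n + 1) → α) → Fin n → α) :=
  measurable_pi_lambda _ fun i => measurable_pi_apply i.castSucc

lemma map_init_poissonArrivalMeasure (n : ℕ) :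
    (poissonArrivalMeasure (n + 1)).map Fin.init = poissonArrivalMeasure n := by
  refine Measure.ext_of_lintegral _ fun F hF => ?_
  rw [lintegral_map hF measurable_fin_init,
    lintegral_poissonArrivalMeasure _ (hF.fun_comp measurable_fin_init),
    setLIntegral_arrivalTimes_succ n (by fun_prop), lintegral_poissonArrivalMeasure n hF]
  simp only [Fin.snoc_last, Fin.init_snoc]
  refine lintegral_congr fun t => ?_
  rw [lintegral_mul_const _ (by fun_prop), setLIntegral_exp_neg_Ioi]

lemma gammaMeasure_eq_withDensity_restrict_Ioi (a b : ℝ) :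
    gammaMeasure a b = (volume.restrict (Ioi 0)).withDensity
      fun x => ENNReal.ofReal (b ^ a / Gamma a * x ^ (a - 1) * exp (-(b * x))) := by
  rw [← Measure.restrict_congr_set Ioi_ae_eq_Ici.symm, ← withDensity_indicator measurableSet_Ici,
    gammaMeasure]
  congr 1 with x
  by_cases hx : 0 ≤ x <;> simp [gammaPDF_eq, indicator, hx]

lemma map_last_poissonArrivalMeasure (n : ℕ) :
    (poissonArrivalMeasure n).map (fun t => t (Fin.last n)) = gammaMeasure (n + 1) 1 := by
  refine Measure.ext_of_lintegral _ fun h hh => ?_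
  rw [lintegral_map hh (measurable_pi_apply _),
    lintegral_poissonArrivalMeasure n (by fun_prop),
    setLIntegral_arrivalTimes_last n (h := fun t => ENNReal.ofReal (exp (-t)) * h t) (by fun_prop),
    gammaMeasure_eq_withDensity_restrict_Ioi,
    lintegral_withDensity_eq_lintegral_mul _ (by fun_prop) hh]
  refine setLIntegral_congr_fun measurableSet_Ioi fun t _ => ?_
  have hdensity : (1 : ℝ) ^ ((n : ℝ) + 1) / Gamma (n + 1) * t ^ ((n : ℝ) + 1 - 1) * exp (-(1 * t)) =
      exp (-t) * (t ^ n / n.factorial) := by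
    rw [one_rpow, Gamma_nat_eq_factorial, add_sub_cancel_right, rpow_natCast, one_mul]
    ring
  rw [Pi.mul_apply, hdensity, ENNReal.ofReal_mul (exp_pos _).le]
  ring

theorem map_eval_poissonArrivalMeasure (n : ℕ) (k : Fin (n + 1)) :
    (poissonArrivalMeasure n).map (fun t => t k) = gammaMeasure (k + 1) 1 := by
  induction n with
  | zero =>
    obtain rfl : k = Fin.last 0 := Subsingleton.elim (α := Fin 1) _ _
    exact map_last_poissonArrivalMeasure 0
  | succ n ih =>
    cases k using Fin.lastCases with
    | last => exact map_last_poissonArrivalMeasure (n + 1)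
    | cast k =>
      rw [Fin.val_castSucc, ← ih k, ← map_init_poissonArrivalMeasure n,
        Measure.map_map (measurable_pi_apply k) measurable_fin_init]
      rfl

end ArrivalTimes

section LogGamma

theorem mgf_log_gammaMeasure {a b s : ℝ} (ha : 0 < a) (hb : 0 < b) (hs : 0 < a + s) :
    mgf log (gammaMeasure a b) s = Gamma (a + s) / Gamma a / b ^ s := by
  have hdensity : ∀ x ∈ Ioi (0 : ℝ),
      b ^ a / Gamma a * x ^ (a - 1) * exp (-(b * x)) * exp (s * log x) =
        b ^ a / Gamma a * (x ^ (a + s - 1) * exp (-(b * x))) := by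
    intro x hx
    rw [mul_comm s, ← rpow_def_of_pos hx, add_sub_right_comm, rpow_add hx]
    ring
  rw [mgf, gammaMeasure_eq_withDensity_restrict_Ioi,
    integral_withDensity_eq_integral_toReal_smul (by fun_prop) (ae_of_all _ fun _ => by simp)]
  calc
    _ = ∫ x in Ioi 0, b ^ a / Gamma a * (x ^ (a + s - 1) * exp (-(b * x))) := by
      refine setIntegral_congr_fun measurableSet_Ioi fun x hx => ?_
      have hx' : 0 < x := hx
      rw [← hdensity x hx, smul_eq_mul, ENNReal.toReal_ofReal]
      have := Gamma_pos_of_pos ha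
      positivity
    _ = Gamma (a + s) / Gamma a / b ^ s := by
      rw [integral_const_mul, integral_rpow_mul_exp_neg_mul_Ioi hs hb,
        div_rpow zero_le_one hb.le, one_rpow, rpow_add hb]
      field_simp

lemma zero_mem_interior_integrableExpSet_log_gammaMeasure {a b : ℝ} (ha : 0 < a) (hb : 0 < b) :
    0 ∈ interior (integrableExpSet log (gammaMeasure a b)) := by
  refine mem_interior.2 ⟨Ioi (-a), fun s hs => ?_, isOpen_Ioi, neg_lt_zero.2 ha⟩
  have has : 0 < a + s := neg_lt_iff_pos_add'.1 hs
  refine Integrable.of_integral_ne_zero ?_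
  change mgf log (gammaMeasure a b) s ≠ 0
  rw [mgf_log_gammaMeasure ha hb has]
  have := Gamma_pos_of_pos has
  have := Gamma_pos_of_pos ha
  positivity

lemma integrable_log_pow_gammaMeasure {a b : ℝ} (ha : 0 < a) (hb : 0 < b) (m : ℕ) :
    Integrable (fun x => log x ^ m) (gammaMeasure a b) :=
  integrable_pow_of_mem_interior_integrableExpSet
    (zero_mem_interior_integrableExpSet_log_gammaMeasure ha hb) m

theorem integral_log_pow_gammaMeasure_one {a : ℝ} (ha : 0 < a) (m : ℕ) :
    ∫ x, log x ^ m ∂gammaMeasure a 1 = iteratedDeriv m Gamma a / Gamma a := by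
  have hmgf : mgf log (gammaMeasure a 1) =ᶠ[𝓝 0] fun s => Gamma (a + s) / Gamma a := by
    filter_upwards [lt_mem_nhds (neg_lt_zero.2 ha)] with s hs
    rw [mgf_log_gammaMeasure ha one_pos (neg_lt_iff_pos_add'.1 hs), one_rpow, div_one]
  calc
    _ = iteratedDeriv m (mgf log (gammaMeasure a 1)) 0 :=
      .symm <| iteratedDeriv_mgf_zero
        (zero_mem_interior_integrableExpSet_log_gammaMeasure ha one_pos) m
    _ = iteratedDeriv m (fun s => Gamma (a + s) / Gamma a) 0 := hmgf.iteratedDeriv_eq m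
    _ = iteratedDeriv m Gamma a / Gamma a := by
      rw [iteratedDeriv_div_const, iteratedDeriv_comp_const_add]
      simp only [add_zero]

end LogGamma

section ChangeOfVariables

theorem lintegral_piMap_image_eq_lintegral_prod_abs_deriv_mul {ι : Type*} [Fintype ι]
    {f f' : ι → ℝ → ℝ} {S : Set (ι → ℝ)} (hS : MeasurableSet S)
    (hf' : ∀ x ∈ S, ∀ i, HasDerivAt (f i) (f' i (x i)) (x i)) (hf : InjOn (Pi.map f) S)
    (g : (ι → ℝ) → ℝ≥0∞) :
    ∫⁻ y in Pi.map f '' S, g y =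
      ∫⁻ x in S, ENNReal.ofReal (∏ i, |f' i (x i)|) * g (Pi.map f x) := by
  have hderiv : ∀ x ∈ S, HasFDerivWithinAt (Pi.map f)
      (ContinuousLinearMap.pi fun i =>
        (ContinuousLinearMap.toSpanSingleton ℝ (f' i (x i))).comp (ContinuousLinearMap.proj i))
      S x := fun x hx =>
    (hasFDerivAt_pi.2 fun i =>
      ((hf' x hx i).hasFDerivAt.comp x (hasFDerivAt_apply i x))).hasFDerivWithinAt
  rw [lintegral_image_eq_lintegral_abs_det_fderiv_mul volume hS hderiv hf]
  simp only [ContinuousLinearMap.det_pi, ContinuousLinearMap.det_toSpanSingleton, Finset.abs_prod]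

end ChangeOfVariables

section GEV

/-- The open half-line carrying the one-dimensional GEV law. -/
def gevSupport (μ σ ξ : ℝ) : Set ℝ := {x | 0 < 1 + ξ * ((x - μ) / σ)}

/-- The intensity `-log F` of the GEV distribution function `F`, which turns GEV order statistics
into Poisson arrival times. Outside `gevSupport μ σ ξ` its value is junk. -/
noncomputable def gevTransform (μ σ ξ x : ℝ) : ℝ := (1 + ξ * ((x - μ) / σ)) ^ (-1 / ξ)

/-- The absolute value of the derivative of `gevTransform μ σ ξ` on `gevSupport μ σ ξ`. The power
`-(1 / ξ + 1)` is written with `exp` and `log` to match the factors of `gevrDensity`. -/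
noncomputable def gevTransformSlope (μ σ ξ x : ℝ) : ℝ :=
  σ⁻¹ * exp (-((1 / ξ + 1) * log (1 + ξ * ((x - μ) / σ))))

/-- The region `D_r` carrying the GEV_r density. -/
def gevrSupport (μ σ ξ : ℝ) (r : ℕ) : Set (Fin r → ℝ) :=
  {x | StrictAnti x ∧ ∀ j, x j ∈ gevSupport μ σ ξ}

variable {μ σ ξ : ℝ}

@[fun_prop]
lemma measurable_gevTransform : Measurable (gevTransform μ σ ξ) := by
  unfold gevTransform
  fun_prop

@[fun_prop]
lemma measurable_gevTransformSlope : Measurable (gevTransformSlope μ σ ξ) := by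
  unfold gevTransformSlope
  fun_prop

lemma gevTransformSlope_pos (hσ : 0 < σ) (x : ℝ) : 0 < gevTransformSlope μ σ ξ x := by
  unfold gevTransformSlope
  positivity

lemma gevTransform_pos {x : ℝ} (hx : x ∈ gevSupport μ σ ξ) : 0 < gevTransform μ σ ξ x :=
  rpow_pos_of_pos hx _

lemma log_eq_neg_mul_log_gevTransform (hξ : ξ ≠ 0) {x : ℝ} (hx : x ∈ gevSupport μ σ ξ) :
    log (1 + ξ * ((x - μ) / σ)) = -ξ * log (gevTransform μ σ ξ x) := by
  rw [gevTransform, log_rpow hx]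
  field_simp

lemma strictAntiOn_gevTransform (hσ : 0 < σ) (hξ : ξ ≠ 0) :
    StrictAntiOn (gevTransform μ σ ξ) (gevSupport μ σ ξ) := by
  intro x hx y hy hxy
  have hz : (x - μ) / σ < (y - μ) / σ := by gcongr
  rcases hξ.lt_or_gt with hneg | hpos
  · exact rpow_lt_rpow (le_of_lt hy) (by linarith [mul_lt_mul_of_neg_left hz hneg])
      (div_pos_of_neg_of_neg (by norm_num) hneg)
  · exact rpow_lt_rpow_of_neg hx (by gcongr) (div_neg_of_neg_of_pos (by norm_num) hpos)

lemma surjOn_gevTransform (hσ : σ ≠ 0) (hξ : ξ ≠ 0) :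
    SurjOn (gevTransform μ σ ξ) (gevSupport μ σ ξ) (Ioi 0) := by
  intro t ht
  have ht' : 0 < t := ht
  have hu : 1 + ξ * ((μ + σ * ((t ^ (-ξ) - 1) / ξ) - μ) / σ) = t ^ (-ξ) := by
    field_simp
    ring
  refine ⟨μ + σ * ((t ^ (-ξ) - 1) / ξ), ?_, ?_⟩
  · rw [gevSupport, mem_ofPred_eq, hu]
    positivity
  · rw [gevTransform, hu, ← rpow_mul ht'.le]
    have hexp : -ξ * (-1 / ξ) = 1 := by field_simp
    rw [hexp, rpow_one]

lemma hasDerivAt_gevTransform (hξ : ξ ≠ 0) {x : ℝ} (hx : x ∈ gevSupport μ σ ξ) :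
    HasDerivAt (gevTransform μ σ ξ) (-gevTransformSlope μ σ ξ x) x := by
  have hlin : HasDerivAt (fun y => 1 + ξ * ((y - μ) / σ)) (ξ * (1 / σ)) x :=
    ((((hasDerivAt_id x).sub_const μ).div_const σ).const_mul ξ).const_add 1
  convert! hlin.rpow_const (p := -1 / ξ) (Or.inl (ne_of_gt hx)) using 1
  have hexp : -((1 / ξ + 1) * log (1 + ξ * ((x - μ) / σ))) =
      log (1 + ξ * ((x - μ) / σ)) * (-1 / ξ - 1) := by ring
  rw [gevTransformSlope, hexp, ← rpow_def_of_pos hx]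
  field_simp

lemma measurableSet_gevrSupport (r : ℕ) : MeasurableSet (gevrSupport μ σ ξ r) := by
  have hanti : MeasurableSet {x : Fin r → ℝ | StrictAnti x} :=
    measurableSet_strictMono (α := ℝᵒᵈ)
  have hsupport : MeasurableSet {x : Fin r → ℝ | ∀ j, x j ∈ gevSupport μ σ ξ} := by
    simp only [gevSupport, mem_ofPred_eq, ofPred_forall]
    exact .iInter fun j => measurableSet_lt (by fun_prop) (by fun_prop)
  exact hanti.inter hsupport

lemma injOn_piMap_gevTransform (hσ : 0 < σ) (hξ : ξ ≠ 0) (r : ℕ) :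
    InjOn (Pi.map fun _ : Fin r => gevTransform μ σ ξ) (gevrSupport μ σ ξ r) :=
  fun _ hx _ hy hxy => funext fun i =>
    (strictAntiOn_gevTransform hσ hξ).injOn (hx.2 i) (hy.2 i) (congrFun hxy i)

lemma piMap_gevTransform_image_gevrSupport (hσ : 0 < σ) (hξ : ξ ≠ 0) (r : ℕ) :
    Pi.map (fun _ => gevTransform μ σ ξ) '' gevrSupport μ σ ξ r = arrivalTimes r := by
  have hanti := strictAntiOn_gevTransform (μ := μ) hσ hξ
  ext t
  constructor
  · rintro ⟨x, ⟨hx, hsupp⟩, rfl⟩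
    exact ⟨fun i => gevTransform_pos (hsupp i), fun i j hij => hanti (hsupp j) (hsupp i) (hx hij)⟩
  · rintro ⟨hpos, hmono⟩
    choose x hsupp hxt using fun i => surjOn_gevTransform (μ := μ) hσ.ne' hξ (hpos i)
    refine ⟨x, ⟨fun i j hij => ?_, hsupp⟩, funext hxt⟩
    rw [← hanti.lt_iff_gt (hsupp i) (hsupp j), hxt, hxt]
    exact hmono hij

lemma gevrDensity_of_mem {n : ℕ} {x : Fin (n + 1) → ℝ} (hx : x ∈ gevrSupport μ σ ξ (n + 1)) :
    gevrDensity μ σ ξ (n + 1) x =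
      (∏ i, gevTransformSlope μ σ ξ (x i)) * exp (-gevTransform μ σ ξ (x (Fin.last n))) := by
  rw [gevrDensity, dif_pos ⟨n.succ_pos, hx⟩, sub_eq_neg_add, exp_add]
  simp only [gevTransformSlope, Finset.prod_mul_distrib, Finset.prod_const, Finset.card_univ,
    Fintype.card_fin, ← exp_sum, Finset.sum_neg_distrib, ← Finset.mul_sum, inv_pow, mul_assoc]
  rfl

lemma gevrDensity_of_notMem {r : ℕ} {x : Fin r → ℝ} (hx : x ∉ gevrSupport μ σ ξ r) :
    gevrDensity μ σ ξ r x = 0 :=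
  dif_neg fun h => hx h.2

lemma gevrMeasure_eq_withDensity_restrict (n : ℕ) :
    gevrMeasure μ σ ξ (n + 1) = (volume.restrict (gevrSupport μ σ ξ (n + 1))).withDensity
      fun x => ENNReal.ofReal
        ((∏ i, gevTransformSlope μ σ ξ (x i)) * exp (-gevTransform μ σ ξ (x (Fin.last n)))) := by
  rw [gevrMeasure, ← withDensity_indicator (measurableSet_gevrSupport (n + 1))]
  congr 1 with x
  by_cases hx : x ∈ gevrSupport μ σ ξ (n + 1)
  · rw [indicator_of_mem hx, gevrDensity_of_mem hx]
  · rw [indicator_of_notMem hx, gevrDensity_of_notMem hx, ENNReal.ofReal_zero]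

lemma ae_mem_gevrSupport (r : ℕ) : ∀ᵐ x ∂gevrMeasure μ σ ξ r, x ∈ gevrSupport μ σ ξ r := by
  have hnull : gevrMeasure μ σ ξ r (gevrSupport μ σ ξ r)ᶜ = 0 := by
    rw [gevrMeasure, withDensity_apply _ (measurableSet_gevrSupport r).compl]
    exact setLIntegral_eq_zero (measurableSet_gevrSupport r).compl fun x hx => by
      simp [gevrDensity_of_notMem hx]
  exact mem_ae_iff.2 hnull

lemma measurable_piMap_gevTransform (r : ℕ) :
    Measurable (Pi.map fun _ : Fin r => gevTransform μ σ ξ) :=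
  measurable_pi_lambda _ fun i => measurable_gevTransform.comp (measurable_pi_apply i)

theorem map_gevTransform_gevrMeasure (hσ : 0 < σ) (hξ : ξ ≠ 0) (n : ℕ) :
    (gevrMeasure μ σ ξ (n + 1)).map (Pi.map fun _ => gevTransform μ σ ξ) =
      poissonArrivalMeasure n := by
  refine Measure.ext_of_lintegral _ fun g hg => ?_
  have hmeas := measurable_piMap_gevTransform (μ := μ) (σ := σ) (ξ := ξ) (n + 1)
  rw [lintegral_map hg hmeas, gevrMeasure_eq_withDensity_restrict,
    lintegral_withDensity_eq_lintegral_mul _ (by fun_prop) (hg.fun_comp hmeas),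
    lintegral_poissonArrivalMeasure n hg, ← piMap_gevTransform_image_gevrSupport hσ hξ,
    lintegral_piMap_image_eq_lintegral_prod_abs_deriv_mul
      (f' := fun _ x => -gevTransformSlope μ σ ξ x) (measurableSet_gevrSupport _)
      (fun x hx i => hasDerivAt_gevTransform hξ (hx.2 i)) (injOn_piMap_gevTransform hσ hξ _)]
  refine lintegral_congr fun x => ?_
  have hslope (i) := gevTransformSlope_pos (μ := μ) (ξ := ξ) hσ (x i)
  simp only [Pi.mul_apply, Pi.map_apply, abs_neg, abs_of_pos (hslope _)]
  rw [ENNReal.ofReal_mul (Finset.prod_nonneg fun i _ => (hslope i).le), mul_assoc]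

theorem map_gevTransform_eval_gevrMeasure (hσ : 0 < σ) (hξ : ξ ≠ 0) {r : ℕ} (k : Fin r) :
    (gevrMeasure μ σ ξ r).map (fun x => gevTransform μ σ ξ (x k)) = gammaMeasure (k + 1) 1 := by
  obtain ⟨n, rfl⟩ := Nat.exists_eq_add_one_of_ne_zero k.pos.ne'
  rw [← map_eval_poissonArrivalMeasure n k, ← map_gevTransform_gevrMeasure hσ hξ n,
    Measure.map_map (measurable_pi_apply k) (measurable_piMap_gevTransform _)]
  rfl

end GEV

theorem gevr_second_moment_log_transform_general (μ : ℝ) {σ ξ : ℝ} (hσ : 0 < σ) (hξ : ξ ≠ 0)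
    {r : ℕ} (k : Fin r) (m : ℕ) :
    Integrable (fun x => log (1 + ξ * ((x k - μ) / σ)) ^ m) (gevrMeasure μ σ ξ r) ∧
      ∫ x, log (1 + ξ * ((x k - μ) / σ)) ^ m ∂gevrMeasure μ σ ξ r =
        (-ξ) ^ m * iteratedDeriv m Gamma (k + 1) / Gamma (k + 1) := by
  have hk : (0 : ℝ) < (k : ℕ) + 1 := by positivity
  have hlaw := map_gevTransform_eval_gevrMeasure (μ := μ) hσ hξ k
  have hT : Measurable fun x : Fin r → ℝ => gevTransform μ σ ξ (x k) := by fun_prop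
  have hlog : (fun x => log (1 + ξ * ((x k - μ) / σ)) ^ m) =ᵐ[gevrMeasure μ σ ξ r]
      fun x => (-ξ) ^ m * log (gevTransform μ σ ξ (x k)) ^ m := by
    filter_upwards [ae_mem_gevrSupport r] with x hx
    rw [log_eq_neg_mul_log_gevTransform hξ (hx.2 k), mul_pow]
  have hint : Integrable (fun x => log (gevTransform μ σ ξ (x k)) ^ m) (gevrMeasure μ σ ξ r) :=
    (hlaw ▸ integrable_log_pow_gammaMeasure hk one_pos m).comp_measurable hT
  refine ⟨(hint.const_mul _).congr hlog.symm, ?_⟩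
  calc
    _ = (-ξ) ^ m * ∫ x, log (gevTransform μ σ ξ (x k)) ^ m ∂gevrMeasure μ σ ξ r := by
      rw [integral_congr_ae hlog, integral_const_mul]
    _ = (-ξ) ^ m * ∫ t, log t ^ m ∂gammaMeasure (k + 1) 1 := by
      rw [← hlaw, integral_map hT.aemeasurable (by fun_prop)]
    _ = _ := by rw [integral_log_pow_gammaMeasure_one hk, mul_div_assoc]

/-- under the GEV_r distribution,
`E[(log(1+ξZ_j))²] = ξ² Γ″(j)/Γ(j)` for every `1 ≤ j ≤ r`; in particular the
expectation is finite. -/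
theorem gevr_second_moment_log_transform
    (μ σ ξ : ℝ) (hσ : 0 < σ) (hξ : ξ ≠ 0) (r : ℕ) (hr : 1 ≤ r)
    (j : ℕ) (hj1 : 1 ≤ j) (hjr : j ≤ r) :
    MeasureTheory.Integrable
      (fun x : Fin r → ℝ =>
        (Real.log (1 + ξ * ((x ⟨j - 1, by omega⟩ - μ) / σ))) ^ 2)
      (gevrMeasure μ σ ξ r) ∧
    ∫ x : Fin r → ℝ,
        (Real.log (1 + ξ * ((x ⟨j - 1, by omega⟩ - μ) / σ))) ^ 2
        ∂(gevrMeasure μ σ ξ r)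
      = ξ ^ 2 * iteratedDeriv 2 Real.Gamma j / Real.Gamma j := by
  obtain ⟨k, rfl⟩ := Nat.exists_eq_add_of_le' hj1
  simpa using gevr_second_moment_log_transform_general μ hσ hξ ⟨k, hjr⟩ 2
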